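/- Assume ◊: there exists a sequence (A_α)_{α<ω₁} with A_α ⊆ α for each α, such that for every B ⊆ ω₁ the set {α < ω₁ : B ∩ α = A_α} is stationary in ω₁ (i.e., meets every closed unbounded subset of ω₁). Then there exists a set Y ⊆ ℝ such that every subset of Y is a γ-set (in the subspace topology of ℝ) and Y is not strongly meager: there is a Lebesgue measure-zero set G' ⊆ ℝ with Y + G' = ℝ. -/

import Mathlib

open Set MeasureTheory Filter Pointwise
open scoped ENNReal

/-- The Cantor space `2^ω`: functions `ω → {0,1}` with the product topology and
coordinatewise addition mod 2 (via `ZMod 2`). -/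
abbrev Cantor : Type := ℕ → ZMod 2

/-- `μ` is the product measure on `2^ω` giving each coordinate the uniform measure:
every cylinder prescribing the coordinates in a finite set `s` has measure `2^{-|s|}`.
(This property characterizes the product measure uniquely.) -/
def IsCantorProductMeasure (μ : Measure Cantor) : Prop :=
  ∀ (s : Finset ℕ) (f : ℕ → ZMod 2),
    μ {x : Cantor | ∀ i ∈ s, x i = f i} = (2 : ENNReal)⁻¹ ^ s.card

/-- A family `J` of subsets is an ω-cover of `X` if every finite subset of `X`
is contained in some member of `J`. -/
def IsOmegaCover {α : Type*} (J : Set (Set α)) (X : Set α) : Prop :=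
  ∀ F : Finset α, ↑F ⊆ X → ∃ U ∈ J, ↑F ⊆ U

/-- `X` is a γ-set (equivalently: `X` with the subspace topology is a γ-space):
for every ω-cover `J` of `X` by open subsets of the ambient space there is a sequence
`D n ∈ J` with `X ⊆ ⋃_m ⋂_{n>m} D n`. -/
def IsGammaSet {α : Type*} [TopologicalSpace α] (X : Set α) : Prop :=
  ∀ J : Set (Set α), (∀ U ∈ J, IsOpen U) → IsOmegaCover J X →
    ∃ D : ℕ → Set α, (∀ n, D n ∈ J) ∧ X ⊆ ⋃ m, ⋂ n > m, D n

/-- The blocks endpoints `k_n = Σ_{i=0}^n 2^i = 2^{n+1} - 1`. -/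
def kseq (n : ℕ) : ℕ := 2 ^ (n + 1) - 1

/-- `A_n = {x ∈ 2^ω : x ↾ [k_n, k_{n+1}) = 0}`. -/
def Aset (n : ℕ) : Set Cantor := {x | ∀ i ∈ Set.Ico (kseq n) (kseq (n + 1)), x i = 0}

/-- The null set `G = ⋂_m ⋃_{n>m} A_n`. -/
def Gset : Set Cantor := ⋂ m, ⋃ n > m, Aset n

/-- The rationals: eventually-zero elements of `2^ω`. -/
def Qset : Set Cantor := {z | ∀ᶠ n in atTop, z n = 0}

/-- `𝒮 = {z ∈ 2^ω : z ↾ [k_n, k_{n+1}) = 1 for infinitely many n}`. -/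
def Sset : Set Cantor :=
  {z | ∃ᶠ n in atTop, ∀ i ∈ Set.Ico (kseq n) (kseq (n + 1)), z i = 1}

/-- `[x]* = {z ∈ 𝒮 : z(n) ≤ x(n) for all but finitely many n}`. -/
def starSet (x : Cantor) : Set Cantor :=
  {z ∈ Sset | ∀ᶠ n in atTop, (z n).val ≤ (x n).val}

/-- `𝔭 = 2^{ℵ₀}`: every family of infinite subsets of `ω` of size `< 2^{ℵ₀}` with the
finite intersection property (all finite intersections infinite) has an infinite
pseudo-intersection. -/
def PseudoIntersectionNumberEqContinuum : Prop :=
  ∀ F : Set (Set ℕ), Cardinal.mk F < 2 ^ Cardinal.aleph0 →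
    (∀ A ∈ F, A.Infinite) →
    (∀ G : Finset (Set ℕ), ↑G ⊆ F → (⋂₀ (G : Set (Set ℕ))).Infinite) →
    ∃ A : Set ℕ, A.Infinite ∧ ∀ B ∈ F, (A \ B).Finite

/-- The first uncountable ordinal `ω₁`. -/
noncomputable def omega1 : Ordinal.{0} := (Cardinal.aleph 1).ord

/-- `C` is closed unbounded in `ω₁`: a subset of `ω₁` which is unbounded in `ω₁` and
contains the supremum of every nonempty bounded subset of itself whose supremum is
below `ω₁`. -/
def IsClubIn (C : Set Ordinal.{0}) : Prop :=
  C ⊆ Set.Iio omega1 ∧ (∀ β < omega1, ∃ γ ∈ C, β < γ) ∧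
    ∀ S : Set Ordinal.{0}, S ⊆ C → S.Nonempty → BddAbove S → sSup S < omega1 → sSup S ∈ C

/-- `T` is stationary in `ω₁`: it meets every closed unbounded subset of `ω₁`. -/
def IsStationaryIn (T : Set Ordinal.{0}) : Prop :=
  ∀ C : Set Ordinal.{0}, IsClubIn C → (T ∩ C).Nonempty

/-- Jensen's diamond principle `◊`: there is a sequence `(A_α)_{α<ω₁}` with `A_α ⊆ α`
such that for every `B ⊆ ω₁` the set `{α < ω₁ : B ∩ α = A_α}` is stationary in `ω₁`. -/
def DiamondPrinciple : Prop :=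
  ∃ A : Ordinal.{0} → Set Ordinal.{0}, (∀ α < omega1, A α ⊆ Set.Iio α) ∧
    ∀ B : Set Ordinal.{0}, B ⊆ Set.Iio omega1 →
      IsStationaryIn {α | α < omega1 ∧ B ∩ Set.Iio α = A α}

/-- The binary expansion map `f : 2^ω → [0,1]`, `f(x) = Σ_i x(i)·2^{-(i+1)}`. -/
noncomputable def binmap (x : Cantor) : ℝ := ∑' i : ℕ, ((x i).val : ℝ) / 2 ^ (i + 1)

/-- `H = ⋂_m ⋃_{n>m} f(A_n)`. -/
noncomputable def Hset : Set ℝ := ⋂ m, ⋃ n > m, binmap '' (Aset n)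

/-- The rational numbers as a subset of `ℝ`. -/
def Qreal : Set ℝ := Set.range ((↑) : ℚ → ℝ)

/-!
Let `U k` be open dense sets of reals whose intersection `G` is null. A condition is a countable
family `P` of nonempty compact sets which is a π-base at each point of its union and such that,
inside any member of `P`, finitely many smaller members suffice to enter all the sets
`{x | y - x ∈ U k}` with `y` in a given compact set. Hence every condition leaves room, for each
`y`, for a point `x` with `y - x ∈ G`.

Stronger conditions are obtained by fusing a finitely branching tree of members of `P`. Suppose that
`J` is an open ω-cover of a countable set `Z`. Each level of the tree is finite, so some `D ∈ J`
meets every member of the level which meets `Z`; shrinking these members into `D` makes each member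
of the level either contained in `D` or disjoint from `Z`. The sets `D` chosen along the levels
therefore converge to every point of the fusion that members of `P` do not separate from `Z`. A
countable decreasing sequence of conditions and countably many covers are handled in one fusion.

Iterate this along `ω₁`, choosing at stage `δ` a point `x δ` from the union of the new condition,
where each `y` is treated at some stage, and letting `◊` guess the countable part of `Z` and,
through a countable basis, the open cover. If `Z ⊆ {x α | α < ω₁}`, then for club many `δ` no member
of an earlier condition separates a point of `Z` from `{x α | α < δ} ∩ Z`, and at such a stage where
the guess is correct the sequence obtained for `{x α | α < δ} ∩ Z` works for all of `Z`.
-/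

theorem exists_seq_frequently_eq {α : Type*} {s : Set α} (hs : s.Countable) (hne : s.Nonempty) :
    ∃ u : ℕ → α, (∀ n, u n ∈ s) ∧ ∀ a ∈ s, ∃ᶠ n in atTop, u n = a := by
  obtain ⟨e, rfl⟩ := hs.exists_eq_range hne
  refine ⟨fun n => e n.unpair.1, fun n => mem_range_self _, ?_⟩
  rintro _ ⟨i, rfl⟩
  exact frequently_atTop.2 fun m => ⟨Nat.pair i m, Nat.right_le_pair i m, by
    simp only [Nat.unpair_pair]⟩

theorem exists_seq_finset_eventually_mem {α : Type*} {Z : Set α} (hZ : Z.Countable) :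
    ∃ g : ℕ → Finset α, (∀ n, ↑(g n) ⊆ Z) ∧ ∀ z ∈ Z, ∀ᶠ n in atTop, z ∈ g n := by
  have := hZ.to_subtype
  obtain ⟨g, hg⟩ := exists_seq_tendsto (atTop : Filter (Finset Z))
  refine ⟨fun n => (g n).map (.subtype (· ∈ Z)), fun n => Finset.map_subtype_subset (g n), ?_⟩
  intro z hz
  filter_upwards [tendsto_atTop.1 hg {⟨z, hz⟩}] with n hn
  exact Finset.mem_map.2 ⟨⟨z, hz⟩, Finset.singleton_subset_iff.1 hn, rfl⟩

theorem exists_finset_forall_inter_nonempty {α : Type*} {W : Set (Set α)} (hW : W.Finite)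
    (Z : Set α) :
    ∃ T : Finset α, ↑T ⊆ Z ∧ ∀ w ∈ W, (w ∩ Z).Nonempty → (w ∩ T).Nonempty := by
  have := (hW.subset (sep_subset W fun w => (w ∩ Z).Nonempty)).to_subtype
  choose z hzw hzZ using fun w : {w ∈ W | (w ∩ Z).Nonempty} => w.2.2
  obtain ⟨T, hT⟩ := (finite_range z).exists_finset_coe
  refine ⟨T, hT ▸ range_subset_iff.2 hzZ, fun w hw hwZ => ⟨z ⟨w, hw, hwZ⟩, hzw ⟨w, hw, hwZ⟩, ?_⟩⟩
  exact hT ▸ mem_range_self _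

theorem exists_finite_isCoinitialFor {α : Type*} [LE α] {W C : Set α} (hW : W.Finite)
    (h : IsCoinitialFor W C) :
    ∃ F ⊆ C, F.Finite ∧ IsCoinitialFor W F ∧ ∀ c ∈ F, ∃ w ∈ W, c ≤ w := by
  have h' : ∀ w ∈ W, ∃ c ∈ C, c ≤ w := fun w hw => h hw
  choose! c hcC hc using h'
  exact ⟨c '' W, image_subset_iff.2 hcC, hW.image c,
    fun w hw => ⟨c w, mem_image_of_mem c hw, hc w hw⟩,
    forall_mem_image.2 fun w hw => ⟨w, hw, hc w hw⟩⟩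

theorem IsOmegaCover.mono {α : Type*} {J : Set (Set α)} {X Y : Set α} (h : IsOmegaCover J X)
    (hYX : Y ⊆ X) : IsOmegaCover J Y :=
  fun F hF => h F (hF.trans hYX)

/-- Some sequence of members of `J` is such that each point of `X` lies in all but finitely many of
its terms: the conclusion of the γ-property of `X` for the cover `J`. -/
def HasGammaSequence {α : Type*} (J : Set (Set α)) (X : Set α) : Prop :=
  ∃ D : ℕ → Set α, (∀ n, D n ∈ J) ∧ ∀ x ∈ X, ∀ᶠ n in atTop, x ∈ D n

theorem HasGammaSequence.mono {α : Type*} {J : Set (Set α)} {X Y : Set α}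
    (h : HasGammaSequence J X) (hYX : Y ⊆ X) : HasGammaSequence J Y :=
  let ⟨D, hDJ, hD⟩ := h
  ⟨D, hDJ, fun x hx => hD x (hYX hx)⟩

theorem HasGammaSequence.of_forall_subset {α : Type*} {J J' : Set (Set α)} {X : Set α}
    (h : HasGammaSequence J X) (hJ : ∀ D ∈ J, ∃ D' ∈ J', D ⊆ D') : HasGammaSequence J' X := by
  obtain ⟨D, hDJ, hD⟩ := h
  choose D' hDJ' hDD' using fun n => hJ (D n) (hDJ n)
  exact ⟨D', hDJ', fun x hx => (hD x hx).mono fun n hn => hDD' n hn⟩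

theorem isGammaSet_iff_hasGammaSequence {α : Type*} [TopologicalSpace α] {X : Set α} :
    IsGammaSet X ↔
      ∀ J : Set (Set α), (∀ U ∈ J, IsOpen U) → IsOmegaCover J X → HasGammaSequence J X := by
  refine forall₃_congr fun J _ _ => exists_congr fun D => and_congr_right fun _ =>
    forall₂_congr fun x _ => ?_
  simp only [mem_iUnion, mem_iInter, atTop_basis_Ioi.eventually_iff, true_and, mem_Ioi, gt_iff_lt]

/-! ### Splitting families and fusions -/

/-- A family of nonempty compact sets which is a π-base at the points of its members (`shrink`) and
in which, for each `n`, every member has finitely many submembers such that each test set in `𝒱 n`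
contains one of them (`split`). Such families are the conditions of the construction; meeting the
test sets is what makes the resulting set of points large. -/
structure IsSplittingFamily {X : Type*} [TopologicalSpace X] (𝒱 : ℕ → Set (Set X))
    (P : Set (Set X)) : Prop where
  isCompact : ∀ p ∈ P, IsCompact p
  nonempty : ∀ p ∈ P, p.Nonempty
  shrink : ∀ p ∈ P, ∀ x ∈ p, ∀ O, IsOpen O → x ∈ O → ∃ q ∈ P, q ⊆ p ∩ O
  split : ∀ p ∈ P, ∀ n, ∃ S ⊆ {q ∈ P | q ⊆ p}, S.Finite ∧ IsCoinitialFor (𝒱 n) S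

namespace IsSplittingFamily

variable {X : Type*} [TopologicalSpace X] {𝒱 : ℕ → Set (Set X)} {P : Set (Set X)}

theorem sUnion {𝔉 : Set (Set (Set X))} (h : ∀ P ∈ 𝔉, IsSplittingFamily 𝒱 P) :
    IsSplittingFamily 𝒱 (⋃₀ 𝔉) where
  isCompact := fun p ⟨P, hP, hp⟩ => (h P hP).isCompact p hp
  nonempty := fun p ⟨P, hP, hp⟩ => (h P hP).nonempty p hp
  shrink := fun p ⟨P, hP, hp⟩ x hx O hO hxO =>
    let ⟨q, hq, hqp⟩ := (h P hP).shrink p hp x hx O hO hxO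
    ⟨q, ⟨P, hP, hq⟩, hqp⟩
  split := fun p ⟨P, hP, hp⟩ n =>
    let ⟨S, hSp, hS⟩ := (h P hP).split p hp n
    ⟨S, fun _ hs => ⟨⟨P, hP, (hSp hs).1⟩, (hSp hs).2⟩, hS⟩

theorem exists_subset_inter (h : IsSplittingFamily 𝒱 P) {p V : Set X} (hp : p ∈ P) {n : ℕ}
    (hV : V ∈ 𝒱 n) : ∃ q ∈ P, q ⊆ p ∩ V := by
  obtain ⟨S, hSp, -, hS⟩ := h.split p hp n
  obtain ⟨q, hq, hqV⟩ := hS hV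
  exact ⟨q, (hSp hq).1, subset_inter (hSp hq).2 hqV⟩

theorem exists_mem_forall_mem [T2Space X] (h : IsSplittingFamily 𝒱 P) {p : Set X} (hp : p ∈ P)
    {V : ℕ → Set X} (hV : ∀ k, ∃ n, V k ∈ 𝒱 n) : ∃ x ∈ p, ∀ k, x ∈ V k := by
  have hnext : ∀ (k : ℕ) (q : P), ∃ r : P, r.1 ⊆ q.1 ∩ V k := fun k q =>
    let ⟨_, hn⟩ := hV k
    let ⟨r, hr, hrq⟩ := h.exists_subset_inter q.2 hn
    ⟨⟨r, hr⟩, hrq⟩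
  choose next hnext using hnext
  let r : ℕ → P := fun k => Nat.rec ⟨p, hp⟩ next k
  have hr : ∀ k, (r (k + 1)).1 ⊆ (r k).1 ∩ V k := fun k => hnext k (r k)
  obtain ⟨x, hx⟩ := IsCompact.nonempty_iInter_of_sequence_nonempty_isCompact_isClosed
    (fun k => (r k).1) (fun k => (hr k).trans inter_subset_left)
    (fun k => h.nonempty _ (r k).2) (h.isCompact _ (r 0).2)
    (fun k => (h.isCompact _ (r k).2).isClosed)
  rw [mem_iInter] at hx
  exact ⟨x, hx 0, fun k => (hr k (hx (k + 1))).2⟩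

end IsSplittingFamily

/-- The sets at depth `i` below `r` in the tree `F`, where `r` sits at level `j`. -/
def schemeLevel {X : Type*} (F : ℕ → Set (Set X)) (j : ℕ) (r : Set X) : ℕ → Set (Set X)
  | 0 => {r}
  | i + 1 => {s ∈ F (j + i + 1) | ∃ t ∈ schemeLevel F j r i, s ⊆ t}

/-- The fusion of the part of the tree `F` below `r`, where `r` sits at level `j`. -/
def schemeFusion {X : Type*} (F : ℕ → Set (Set X)) (j : ℕ) (r : Set X) : Set X :=
  ⋂ i, ⋃₀ schemeLevel F j r i

/-- The family of all fusions of a tree. -/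
def schemeFamily {X : Type*} (F : ℕ → Set (Set X)) : Set (Set X) :=
  ⋃ j, schemeFusion F j '' F j

section SchemeFamily

variable {X : Type*} {F : ℕ → Set (Set X)} {j : ℕ} {r : Set X}

theorem schemeFusion_mem_schemeFamily (hr : r ∈ F j) : schemeFusion F j r ∈ schemeFamily F :=
  mem_iUnion.2 ⟨j, mem_image_of_mem _ hr⟩

theorem forall_mem_schemeFamily {C : Set X → Prop} :
    (∀ p ∈ schemeFamily F, C p) ↔ ∀ j, ∀ r ∈ F j, C (schemeFusion F j r) := by
  simp only [schemeFamily, mem_iUnion, forall_exists_index]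
  exact forall_comm.trans (forall_congr' fun _ => forall_mem_image)

theorem schemeLevel_subset (hr : r ∈ F j) (i : ℕ) : schemeLevel F j r i ⊆ F (j + i) := by
  cases i with
  | zero => rintro s rfl; exact hr
  | succ i => exact fun s hs => hs.1

theorem schemeLevel_trans {i : ℕ} {s : Set X} (hs : s ∈ schemeLevel F j r i) (i' : ℕ) :
    schemeLevel F (j + i) s i' ⊆ schemeLevel F j r (i + i') := by
  induction i' with
  | zero => rintro t rfl; exact hs
  | succ i' ih =>
    rintro t ⟨ht, u, hu, htu⟩
    exact ⟨by rwa [add_assoc j i i'] at ht, u, ih hu, htu⟩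

theorem antitone_sUnion_schemeLevel : Antitone fun i => ⋃₀ schemeLevel F j r i := by
  refine antitone_nat_of_succ_le fun i => ?_
  rintro x ⟨s, ⟨-, t, ht, hst⟩, hx⟩
  exact ⟨t, ht, hst hx⟩

theorem schemeFusion_subset : schemeFusion F j r ⊆ r :=
  (iInter_subset _ 0).trans (sUnion_singleton r).subset

theorem schemeFusion_mono {i : ℕ} {s : Set X} (hs : s ∈ schemeLevel F j r i) :
    schemeFusion F (j + i) s ⊆ schemeFusion F j r :=
  subset_iInter fun i' => (iInter_subset _ i').trans <|
    (sUnion_subset_sUnion (schemeLevel_trans hs i')).trans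
      (antitone_sUnion_schemeLevel (Nat.le_add_left i' i))

theorem schemeFusion_subset_sUnion (hr : r ∈ F j) (i : ℕ) : schemeFusion F j r ⊆ ⋃₀ F (j + i) :=
  (iInter_subset _ i).trans (sUnion_subset_sUnion (schemeLevel_subset hr i))

theorem eventually_mem_sUnion_of_mem_sUnion_schemeFamily {x : X} (hx : x ∈ ⋃₀ schemeFamily F) :
    ∀ᶠ j in atTop, x ∈ ⋃₀ F j := by
  obtain ⟨q, hq, hxq⟩ := hx
  obtain ⟨j, r, hr, rfl⟩ := mem_iUnion.1 hq
  filter_upwards [eventually_ge_atTop j] with i hi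
  obtain ⟨i, rfl⟩ := Nat.exists_eq_add_of_le hi
  exact schemeFusion_subset_sUnion hr i hxq

theorem isCoinitialFor_schemeFamily : IsCoinitialFor (F j) (schemeFamily F) := fun _ hr =>
  ⟨_, schemeFusion_mem_schemeFamily hr, schemeFusion_subset⟩

theorem countable_schemeFamily (hF : ∀ j, (F j).Finite) : (schemeFamily F).Countable :=
  countable_iUnion fun j => (hF j).countable.image _

theorem nonempty_schemeLevel (hF : ∀ j, IsCoinitialFor (F j) (F (j + 1))) (hr : r ∈ F j) (i : ℕ) :
    (schemeLevel F j r i).Nonempty := by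
  induction i with
  | zero => exact singleton_nonempty r
  | succ i ih =>
    obtain ⟨t, ht⟩ := ih
    obtain ⟨s, hs, hst⟩ := hF _ (schemeLevel_subset hr i ht)
    exact ⟨s, hs, t, ht, hst⟩

end SchemeFamily

/-- A Souslin-type scheme of nonempty compact sets with finite levels `F j`: each member has members
below it on the next level, the diameters tend to `0`, and each test set of `𝒱 j` is met by a
member of the next level below any given member of `F j`. -/
structure IsScheme {X : Type*} [PseudoMetricSpace X] (𝒱 : ℕ → Set (Set X))
    (F : ℕ → Set (Set X)) : Prop where
  finite : ∀ j, (F j).Finite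
  isCompact : ∀ j, ∀ r ∈ F j, IsCompact r
  nonempty : ∀ j, ∀ r ∈ F j, r.Nonempty
  coinitial : ∀ j, IsCoinitialFor (F j) (F (j + 1))
  small : ∀ j, ∀ r ∈ F (j + 1), ∃ c, r ⊆ Metric.ball c (1 / ((j : ℝ) + 1))
  split : ∀ j, ∀ r ∈ F j, ∀ V ∈ 𝒱 j, ∃ s ∈ F (j + 1), s ⊆ r ∩ V

namespace IsScheme

variable {X : Type*} [MetricSpace X] {𝒱 : ℕ → Set (Set X)} {F : ℕ → Set (Set X)} {j : ℕ} {r : Set X}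

theorem isCompact_sUnion_schemeLevel (h : IsScheme 𝒱 F) (hr : r ∈ F j) (i : ℕ) :
    IsCompact (⋃₀ schemeLevel F j r i) :=
  ((h.finite _).subset (schemeLevel_subset hr i)).isCompact_sUnion fun s hs =>
    h.isCompact _ s (schemeLevel_subset hr i hs)

theorem nonempty_sUnion_schemeLevel (h : IsScheme 𝒱 F) (hr : r ∈ F j) (i : ℕ) :
    (⋃₀ schemeLevel F j r i).Nonempty := by
  obtain ⟨s, hs⟩ := nonempty_schemeLevel h.coinitial hr i
  exact (h.nonempty _ s (schemeLevel_subset hr i hs)).mono (subset_sUnion_of_mem hs)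

theorem isCompact_schemeFusion (h : IsScheme 𝒱 F) (hr : r ∈ F j) :
    IsCompact (schemeFusion F j r) :=
  (h.isCompact j r hr).of_isClosed_subset
    (isClosed_iInter fun i => (h.isCompact_sUnion_schemeLevel hr i).isClosed) schemeFusion_subset

theorem nonempty_schemeFusion (h : IsScheme 𝒱 F) (hr : r ∈ F j) : (schemeFusion F j r).Nonempty :=
  IsCompact.nonempty_iInter_of_sequence_nonempty_isCompact_isClosed _
    (fun i => antitone_sUnion_schemeLevel (Nat.le_succ i)) (h.nonempty_sUnion_schemeLevel hr)
    (h.isCompact_sUnion_schemeLevel hr 0) fun i => (h.isCompact_sUnion_schemeLevel hr i).isClosed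

theorem exists_schemeLevel_subset (h : IsScheme 𝒱 F) (hr : r ∈ F j) {x : X}
    (hx : x ∈ schemeFusion F j r) {O : Set X} (hO : IsOpen O) (hxO : x ∈ O) :
    ∃ i, ∃ s ∈ schemeLevel F j r i, s ⊆ O := by
  obtain ⟨ε, hε, hball⟩ := Metric.isOpen_iff.1 hO x hxO
  obtain ⟨n, hn⟩ := exists_nat_one_div_lt (half_pos hε)
  obtain ⟨s, hs, hxs⟩ := mem_iInter.1 hx (n + 1)
  obtain ⟨c, hc⟩ := h.small (j + n) s (schemeLevel_subset hr _ hs)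
  have hjn : 1 / (((j + n : ℕ) : ℝ) + 1) ≤ 1 / ((n : ℝ) + 1) := by
    gcongr
    exact Nat.le_add_left n j
  refine ⟨n + 1, s, hs, fun y hy => hball (Metric.mem_ball.2 ?_)⟩
  calc dist y x ≤ dist y c + dist x c := dist_triangle_right y x c
    _ < ε / 2 + ε / 2 := add_lt_add ((Metric.mem_ball.1 (hc hy)).trans_le (hjn.trans hn.le))
        ((Metric.mem_ball.1 (hc hxs)).trans_le (hjn.trans hn.le))
    _ = ε := add_halves ε

theorem exists_finite_schemeFusion_coinitial (h : IsScheme 𝒱 F) (h𝒱 : Monotone 𝒱) (hr : r ∈ F j)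
    (n : ℕ) :
    ∃ S ⊆ {q ∈ schemeFamily F | q ⊆ schemeFusion F j r}, S.Finite ∧ IsCoinitialFor (𝒱 n) S := by
  refine ⟨schemeFusion F (j + (n + 1)) '' schemeLevel F j r (n + 1), ?_,
    ((h.finite _).subset (schemeLevel_subset hr _)).image _, fun V hV => ?_⟩
  · rintro _ ⟨s, hs, rfl⟩
    exact ⟨schemeFusion_mem_schemeFamily (schemeLevel_subset hr _ hs), schemeFusion_mono hs⟩
  · obtain ⟨t, ht⟩ := nonempty_schemeLevel h.coinitial hr n
    obtain ⟨s, hs, hst⟩ := h.split _ t (schemeLevel_subset hr n ht) V (h𝒱 (Nat.le_add_left n j) hV)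
    exact ⟨_, mem_image_of_mem _ ⟨hs, t, ht, hst.trans inter_subset_left⟩,
      schemeFusion_subset.trans (hst.trans inter_subset_right)⟩

theorem isSplittingFamily_schemeFamily (h : IsScheme 𝒱 F) (h𝒱 : Monotone 𝒱) :
    IsSplittingFamily 𝒱 (schemeFamily F) where
  isCompact := forall_mem_schemeFamily.2 fun _ _ => h.isCompact_schemeFusion
  nonempty := forall_mem_schemeFamily.2 fun _ _ => h.nonempty_schemeFusion
  shrink := forall_mem_schemeFamily.2 fun _ _ hr _ hx _ hO hxO =>
    let ⟨_, _, hs, hsO⟩ := h.exists_schemeLevel_subset hr hx hO hxO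
    ⟨_, schemeFusion_mem_schemeFamily (schemeLevel_subset hr _ hs),
      subset_inter (schemeFusion_mono hs) (schemeFusion_subset.trans hsO)⟩
  split := forall_mem_schemeFamily.2 fun _ _ hr n =>
    h.exists_finite_schemeFusion_coinitial h𝒱 hr n

end IsScheme

/-! ### Capturing ω-covers -/

/-- The closure of `Z` when the members of `P` are taken as the neighbourhoods of their points. -/
def relClosure {X : Type*} (P : Set (Set X)) (Z : Set X) : Set X :=
  {x | ∀ p ∈ P, x ∈ p → (p ∩ Z).Nonempty}

namespace IsSplittingFamily

section TopologicalSpace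

variable {X : Type*} [TopologicalSpace X] {𝒱 : ℕ → Set (Set X)} {P : Set (Set X)}

theorem isCoinitialFor_subset_or_disjoint (h : IsSplittingFamily 𝒱 P) {W : Set (Set X)}
    (hWP : W ⊆ P) {D Z : Set X} (hD : IsOpen D)
    (hDZ : ∀ w ∈ W, (w ∩ Z).Nonempty → (w ∩ D).Nonempty) :
    IsCoinitialFor W {s ∈ P | s ⊆ D ∨ Disjoint s Z} := by
  intro w hw
  by_cases hwZ : Disjoint w Z
  · exact ⟨w, ⟨hWP hw, .inr hwZ⟩, le_rfl⟩
  · obtain ⟨x, hxw, hxD⟩ := hDZ w hw (not_disjoint_iff_nonempty_inter.1 hwZ)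
    obtain ⟨s, hs, hsw⟩ := h.shrink w (hWP hw) x hxw D hD hxD
    exact ⟨s, ⟨hs, .inl (hsw.trans inter_subset_right)⟩, hsw.trans inter_subset_left⟩

theorem exists_finite_subset_cover_or_disjoint (h : IsSplittingFamily 𝒱 P) {W : Set (Set X)}
    (hW : W.Finite) (hWP : W ⊆ P) {Z : Set X} {J : Set (Set X)} (hJo : ∀ D ∈ J, IsOpen D)
    (hJ : IsOmegaCover J Z) {g : Finset X} (hg : ↑g ⊆ Z) :
    ∃ D ∈ J, ↑g ⊆ D ∧ ∃ F ⊆ {s ∈ P | s ⊆ D ∨ Disjoint s Z}, F.Finite ∧ IsCoinitialFor W F ∧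
      ∀ s ∈ F, ∃ w ∈ W, s ⊆ w := by
  classical
  obtain ⟨T, hTZ, hT⟩ := exists_finset_forall_inter_nonempty hW Z
  obtain ⟨D, hDJ, hD⟩ := hJ (g ∪ T) (by rw [Finset.coe_union]; exact union_subset hg hTZ)
  rw [Finset.coe_union, union_subset_iff] at hD
  exact ⟨D, hDJ, hD.1, exists_finite_isCoinitialFor hW <|
    h.isCoinitialFor_subset_or_disjoint hWP (hJo D hDJ) fun w hw hwZ =>
      (hT w hw hwZ).mono (inter_subset_inter_right w hD.2)⟩

theorem exists_finite_split (h : IsSplittingFamily 𝒱 P) {F : Set (Set X)} (hF : F.Finite)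
    (hFP : F ⊆ P) (n : ℕ) :
    ∃ W ⊆ P, W.Finite ∧ ∀ r ∈ F, ∀ V ∈ 𝒱 n, ∃ s ∈ W, s ⊆ r ∩ V := by
  choose! S hSr hSfin hS using fun r (hr : r ∈ F) => h.split r (hFP hr) n
  refine ⟨⋃ r ∈ F, S r, iUnion₂_subset fun r hr s hs => (hSr r hr hs).1, hF.biUnion hSfin,
    fun r hr V hV => ?_⟩
  obtain ⟨s, hs, hsV⟩ := hS r hr hV
  exact ⟨s, mem_biUnion hr hs, subset_inter (hSr r hr hs).2 hsV⟩

end TopologicalSpace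

section PseudoMetricSpace

variable {X : Type*} [PseudoMetricSpace X] {𝒱 : ℕ → Set (Set X)} {P : Set (Set X)}

theorem isCoinitialFor_subset_ball (h : IsSplittingFamily 𝒱 P) {e : Set X}
    (he : IsCoinitialFor P {q ∈ P | q ⊆ e}) {ε : ℝ} (hε : 0 < ε) :
    IsCoinitialFor P {s ∈ P | s ⊆ e ∧ ∃ c, s ⊆ Metric.ball c ε} := by
  intro p hp
  obtain ⟨q, ⟨hq, hqe⟩, hqp⟩ := he hp
  obtain ⟨x, hx⟩ := h.nonempty q hq
  obtain ⟨s, hs, hsq⟩ := h.shrink q hq x hx _ Metric.isOpen_ball (Metric.mem_ball_self hε)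
  rw [subset_inter_iff] at hsq
  exact ⟨s, ⟨hs, hsq.1.trans hqe, x, hsq.2⟩, hsq.1.trans hqp⟩

theorem exists_scheme_step (h : IsSplittingFamily 𝒱 P) {F : Set (Set X)} (hF : F.Finite)
    (hFP : F ⊆ P) {p : Set X} (hp : p ∈ P) {e : Set X} (he : IsCoinitialFor P {q ∈ P | q ⊆ e})
    {Z : Set X} {J : Set (Set X)} (hJo : ∀ D ∈ J, IsOpen D) (hJ : IsOmegaCover J Z)
    {g : Finset X} (hg : ↑g ⊆ Z) (n : ℕ) {ε : ℝ} (hε : 0 < ε) :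
    ∃ F' ⊆ P, ∃ D ∈ J, F'.Finite ∧ IsCoinitialFor (insert p F) F' ∧
      (∀ r ∈ F, ∀ V ∈ 𝒱 n, ∃ s ∈ F', s ⊆ r ∩ V) ∧ (∀ s ∈ F', ∃ c, s ⊆ Metric.ball c ε) ∧
      ↑g ⊆ D ∧ ∀ s ∈ F', s ⊆ e ∧ (s ⊆ D ∨ Disjoint s Z) := by
  obtain ⟨S, hSP, hS, hSF⟩ := h.exists_finite_split hF hFP n
  have hWP : insert p F ∪ S ⊆ P := union_subset (insert_subset hp hFP) hSP
  obtain ⟨W, hW, hWfin, hSW, -⟩ := exists_finite_isCoinitialFor ((hF.insert p).union hS)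
    ((h.isCoinitialFor_subset_ball he hε).mono_left hWP)
  obtain ⟨D, hDJ, hgD, F', hF', hF'fin, hWF', hF'W⟩ :=
    h.exists_finite_subset_cover_or_disjoint hWfin (fun w hw => (hW hw).1) hJo hJ hg
  have hcoinitial : IsCoinitialFor (insert p F ∪ S) F' := hSW.trans hWF'
  refine ⟨F', fun s hs => (hF' hs).1, D, hDJ, hF'fin, hcoinitial.mono_left subset_union_left,
    fun r hr V hV => ?_, fun s hs => ?_, hgD, fun s hs => ⟨?_, (hF' hs).2⟩⟩
  · obtain ⟨t, ht, htr⟩ := hSF r hr V hV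
    obtain ⟨s, hs, hst⟩ := hcoinitial (.inr ht)
    exact ⟨s, hs, hst.trans htr⟩
  · obtain ⟨w, hw, hsw⟩ := hF'W s hs
    obtain ⟨c, hc⟩ := (hW hw).2.2
    exact ⟨c, hsw.trans hc⟩
  · obtain ⟨w, hw, hsw⟩ := hF'W s hs
    exact hsw.trans (hW hw).2.1

theorem exists_isScheme (h : IsSplittingFamily 𝒱 P) {p e : ℕ → Set X} (hp : ∀ j, p j ∈ P)
    (he : ∀ j, IsCoinitialFor P {q ∈ P | q ⊆ e j}) {Z : Set X} {J : ℕ → Set (Set X)}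
    (hJo : ∀ j, ∀ D ∈ J j, IsOpen D) (hJ : ∀ j, IsOmegaCover (J j) Z) {g : ℕ → Finset X}
    (hg : ∀ j, ↑(g j) ⊆ Z) :
    ∃ (F : ℕ → Set (Set X)) (D : ℕ → Set X), IsScheme 𝒱 F ∧ (∀ j, F j ⊆ P) ∧
      (∀ j, ∃ r ∈ F (j + 1), r ⊆ p j) ∧ (∀ j, D j ∈ J j ∧ ↑(g j) ⊆ D j) ∧
      ∀ j, ∀ s ∈ F (j + 1), s ⊆ e j ∧ (s ⊆ D j ∨ Disjoint s Z) := by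
  have hstep := fun (j : ℕ) (F : {F : Set (Set X) // F.Finite ∧ F ⊆ P}) =>
    h.exists_scheme_step F.2.1 F.2.2 (hp j) (he j) (hJo j) (hJ j) (hg j) j
      (Nat.one_div_pos_of_nat (α := ℝ) (n := j))
  choose next hP D hDJ hfin hcoinitial hsplit hsmall hgD hD using hstep
  let F : ℕ → {F : Set (Set X) // F.Finite ∧ F ⊆ P} := fun j =>
    Nat.rec ⟨∅, finite_empty, empty_subset _⟩ (fun j F => ⟨next j F, hfin j F, hP j F⟩) j
  refine ⟨fun j => (F j).1, fun j => D j (F j), ?_, fun j => (F j).2.2,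
    fun j => hcoinitial j (F j) (mem_insert _ _), fun j => ⟨hDJ j (F j), hgD j (F j)⟩,
    fun j => hD j (F j)⟩
  exact {
    finite := fun j => (F j).2.1
    isCompact := fun j r hr => h.isCompact r ((F j).2.2 hr)
    nonempty := fun j r hr => h.nonempty r ((F j).2.2 hr)
    coinitial := fun j => (hcoinitial j (F j)).mono_left (subset_insert _ _)
    small := fun j => hsmall j (F j)
    split := fun j => hsplit j (F j) }

end PseudoMetricSpace

end IsSplittingFamily

section Capture

variable {X : Type*} {P Q : Set (Set X)} {Z : Set X} {F : ℕ → Set (Set X)} {D : ℕ → Set X}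

theorem eventually_mem_of_mem_sUnion_schemeFamily (hFP : ∀ j, F j ⊆ P)
    (hD : ∀ j, ∀ s ∈ F (j + 1), s ⊆ D j ∨ Disjoint s Z) {x : X} (hx : x ∈ ⋃₀ schemeFamily F)
    (hxZ : x ∈ relClosure P Z) : ∀ᶠ j in atTop, x ∈ D j := by
  filter_upwards [(tendsto_add_atTop_nat 1).eventually
    (eventually_mem_sUnion_of_mem_sUnion_schemeFamily hx)] with j ⟨s, hs, hxs⟩
  exact (hD j s hs).resolve_right
    (not_disjoint_iff_nonempty_inter.2 (hxZ s (hFP _ hs) hxs)) hxs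

theorem hasGammaSequence_of_frequently_eq {J : ℕ → Set (Set X)} (hDJ : ∀ j, D j ∈ J j)
    (hDX : ∀ z ∈ Z, ∀ᶠ j in atTop, z ∈ D j) {J₀ : Set (Set X)} (hJ : ∃ᶠ j in atTop, J j = J₀) :
    HasGammaSequence J₀ Z := by
  obtain ⟨φ, hφ, hJφ⟩ := extraction_of_frequently_atTop hJ
  exact ⟨D ∘ φ, fun n => hJφ n ▸ hDJ (φ n), fun z hz => hφ.tendsto_atTop.eventually (hDX z hz)⟩

end Capture

theorem IsSplittingFamily.exists_schemeFamily_capture {X : Type*} [MetricSpace X]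
    {𝒱 : ℕ → Set (Set X)} {P : Set (Set X)} (h : IsSplittingFamily 𝒱 P) (hP : P.Countable)
    (hPne : P.Nonempty) {ℰ : Set (Set X)} (hℰ : ℰ.Countable) (hℰne : ℰ.Nonempty)
    (hPℰ : ∀ e ∈ ℰ, IsCoinitialFor P {q ∈ P | q ⊆ e}) {Z : Set X} (hZ : Z.Countable)
    {𝒥 : Set (Set (Set X))} (h𝒥 : 𝒥.Countable) (h𝒥ne : 𝒥.Nonempty)
    (h𝒥o : ∀ J ∈ 𝒥, ∀ D ∈ J, IsOpen D) (h𝒥Z : ∀ J ∈ 𝒥, IsOmegaCover J Z) :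
    ∃ F, IsScheme 𝒱 F ∧ IsCoinitialFor P (schemeFamily F) ∧
      (∀ e ∈ ℰ, ⋃₀ schemeFamily F ⊆ e) ∧
      ∀ J ∈ 𝒥, HasGammaSequence J (Z ∪ ⋃₀ schemeFamily F ∩ relClosure P Z) := by
  obtain ⟨p, hpP, hp⟩ := exists_seq_frequently_eq hP hPne
  obtain ⟨e, heℰ, he⟩ := exists_seq_frequently_eq hℰ hℰne
  obtain ⟨J, hJ𝒥, hJ⟩ := exists_seq_frequently_eq h𝒥 h𝒥ne
  obtain ⟨g, hgZ, hg⟩ := exists_seq_finset_eventually_mem hZ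
  obtain ⟨F, D, hF, hFP, hFp, hDJ, hFe⟩ := h.exists_isScheme hpP (fun j => hPℰ _ (heℰ j))
    (fun j => h𝒥o _ (hJ𝒥 j)) (fun j => h𝒥Z _ (hJ𝒥 j)) hgZ
  refine ⟨F, hF, fun q hq => ?_, fun e₀ he₀ x hx => ?_, fun J₀ hJ₀ =>
    hasGammaSequence_of_frequently_eq (fun j => (hDJ j).1) ?_ (hJ J₀ hJ₀)⟩
  · obtain ⟨j, rfl⟩ := (hp q hq).exists
    obtain ⟨r, hr, hrp⟩ := hFp j
    obtain ⟨s, hs, hsr⟩ := isCoinitialFor_schemeFamily hr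
    exact ⟨s, hs, hsr.trans hrp⟩
  · have hxF := (tendsto_add_atTop_nat 1).eventually
      (eventually_mem_sUnion_of_mem_sUnion_schemeFamily hx)
    obtain ⟨j, rfl, s, hs, hxs⟩ := ((he e₀ he₀).and_eventually hxF).exists
    exact (hFe j s hs).1 hxs
  · rintro x (hx | ⟨hxF, hxZ⟩)
    · exact (hg x hx).mono fun j hj => (hDJ j).2 hj
    · exact eventually_mem_of_mem_sUnion_schemeFamily hFP (fun j s hs => (hFe j s hs).2) hxF hxZ

/-- `Q` is a stronger condition than `P`: it covers less, but has a member inside every member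
of `P`. -/
structure Refines {X : Type*} (Q P : Set (Set X)) : Prop where
  coinitial : IsCoinitialFor P Q
  sUnion_subset : ⋃₀ Q ⊆ ⋃₀ P

theorem isCoinitialFor_sUnion_of_isChain_refines {X : Type*} {𝔉 : Set (Set (Set X))}
    (h𝔉 : IsChain Refines 𝔉) {P : Set (Set X)} (hP : P ∈ 𝔉) :
    IsCoinitialFor (⋃₀ 𝔉) {q ∈ ⋃₀ 𝔉 | q ⊆ ⋃₀ P} := by
  rintro p ⟨P', hP', hp⟩
  rcases eq_or_ne P' P with rfl | hne
  · exact ⟨p, ⟨⟨P', hP', hp⟩, subset_sUnion_of_mem hp⟩, le_rfl⟩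
  rcases h𝔉 hP' hP hne with hle | hle
  · exact ⟨p, ⟨⟨P', hP', hp⟩, (subset_sUnion_of_mem hp).trans hle.sUnion_subset⟩, le_rfl⟩
  · obtain ⟨q, hq, hqp⟩ := hle.coinitial hp
    exact ⟨q, ⟨⟨P, hP, hq⟩, subset_sUnion_of_mem hq⟩, hqp⟩

/-- A countable splitting family `Q` refining all families in `𝔉` and capturing the ω-covers
`J ∈ 𝒥` of `Z`: however `Z` is enlarged by points which the members of `⋃₀ 𝔉` do not separate from
`Z` and which lie in `⋃₀ Q`, a sequence from `J` will do for the enlarged set. -/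
structure IsRefinement {X : Type*} [TopologicalSpace X] (𝒱 : ℕ → Set (Set X))
    (𝔉 𝒥 : Set (Set (Set X))) (Z : Set X) (Q : Set (Set X)) : Prop where
  countable : Q.Countable
  isSplittingFamily : IsSplittingFamily 𝒱 Q
  refines : ∀ P ∈ 𝔉, Refines Q P
  capture : ∀ J ∈ 𝒥, IsOmegaCover J Z → HasGammaSequence J (Z ∪ ⋃₀ Q ∩ relClosure (⋃₀ 𝔉) Z)

theorem exists_isRefinement {X : Type*} [MetricSpace X] {𝒱 : ℕ → Set (Set X)} (h𝒱 : Monotone 𝒱)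
    {𝔉 𝒥 : Set (Set (Set X))} {Z : Set X} (h𝔉 : 𝔉.Countable) (h𝔉c : ∀ P ∈ 𝔉, P.Countable)
    (h𝔉s : ∀ P ∈ 𝔉, IsSplittingFamily 𝒱 P) (h𝔉r : IsChain Refines 𝔉) (h𝔉ne : (⋃₀ 𝔉).Nonempty)
    (h𝒥 : 𝒥.Countable) (h𝒥o : ∀ J ∈ 𝒥, ∀ D ∈ J, IsOpen D) (hZ : Z.Countable) :
    ∃ Q, IsRefinement 𝒱 𝔉 𝒥 Z Q := by
  -- The trivial cover keeps `𝒥'` nonempty, so that it can be enumerated.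
  let 𝒥' : Set (Set (Set X)) := insert {univ} {J ∈ 𝒥 | IsOmegaCover J Z}
  have h𝒥'o : ∀ J ∈ 𝒥', ∀ D ∈ J, IsOpen D := by
    rintro J (rfl | ⟨hJ, -⟩) D hD
    · exact hD ▸ isOpen_univ
    · exact h𝒥o J hJ D hD
  have h𝒥'Z : ∀ J ∈ 𝒥', IsOmegaCover J Z := by
    rintro J (rfl | ⟨-, hJ⟩)
    · exact fun _ _ => ⟨univ, rfl, subset_univ _⟩
    · exact hJ
  obtain ⟨F, hF, hF𝔉, hFsub, hFJ⟩ := (IsSplittingFamily.sUnion h𝔉s).exists_schemeFamily_capture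
    (h𝔉.sUnion h𝔉c) h𝔉ne (h𝔉.image sUnion) (h𝔉ne.of_sUnion.image sUnion)
    (forall_mem_image.2 fun _ => isCoinitialFor_sUnion_of_isChain_refines h𝔉r) hZ
    ((h𝒥.mono (sep_subset _ _)).insert {univ}) (insert_nonempty _ _) h𝒥'o h𝒥'Z
  exact ⟨schemeFamily F, countable_schemeFamily hF.finite, hF.isSplittingFamily_schemeFamily h𝒱,
    fun P hP => ⟨hF𝔉.mono_left (subset_sUnion_of_mem hP), hFsub _ (mem_image_of_mem _ hP)⟩,
    fun J hJ hJZ => hFJ J (.inr ⟨hJ, hJZ⟩)⟩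

/-! ### Guessing sequences on `ω₁` -/

theorem omega1_eq_omega_one : omega1 = Ordinal.omega 1 :=
  Cardinal.ord_aleph 1

theorem iSup_lt_omega1 {ι : Type*} [Countable ι] {f : ι → Ordinal.{0}}
    (hf : ∀ i, f i < omega1) : ⨆ i, f i < omega1 := by
  simp only [omega1_eq_omega_one] at hf ⊢
  exact Ordinal.iSup_lt_omega_one hf

theorem isSuccLimit_omega1 : Order.IsSuccLimit omega1 :=
  Cardinal.isSuccLimit_ord (Cardinal.aleph0_le_aleph 1)

theorem omega0_lt_omega1 : Ordinal.omega0 < omega1 :=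
  omega1_eq_omega_one ▸ Ordinal.omega0_lt_omega_one

theorem countable_Iio_of_lt_omega1 {δ : Ordinal.{0}} (hδ : δ < omega1) : (Iio δ).Countable := by
  rw [← Cardinal.le_aleph0_iff_set_countable, Cardinal.mk_Iio_ordinal]
  have hcard : δ.card ≤ Cardinal.aleph0 := by simpa using Cardinal.lt_ord.1 hδ
  exact Cardinal.lift_le_aleph0.2 hcard

theorem exists_gt_forall_lt_apply_le {h : Ordinal.{0} → Ordinal.{0}}
    (hh : ∀ α < omega1, h α < omega1) {β : Ordinal.{0}} (hβ : β < omega1) :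
    ∃ δ < omega1, β < δ ∧ ∀ α < δ, h α ≤ δ := by
  let f : Ordinal.{0} → Ordinal.{0} := fun δ => ⨆ α : Iio δ, h α
  have hf : ∀ δ < omega1, f δ < omega1 := fun δ hδ =>
    have := (countable_Iio_of_lt_omega1 hδ).to_subtype
    iSup_lt_omega1 fun α => hh α (lt_trans α.2 hδ)
  refine ⟨Ordinal.nfp f (Order.succ β), ?_, (Order.lt_succ β).trans_le (Ordinal.le_nfp f _),
    fun α hα => ?_⟩
  · exact Cardinal.nfp_lt_ord_of_isRegular Cardinal.isRegular_aleph_one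
      Cardinal.aleph0_lt_aleph_one.ne' hf (isSuccLimit_omega1.succ_lt hβ)
  · obtain ⟨n, hn⟩ := Ordinal.lt_nfp_iff.1 hα
    calc h α ≤ f (f^[n] (Order.succ β)) :=
          Ordinal.le_iSup (fun α : Iio (f^[n] (Order.succ β)) => h α) ⟨α, hn⟩
      _ = f^[n + 1] (Order.succ β) := (Function.iterate_succ_apply' f n _).symm
      _ ≤ Ordinal.nfp f (Order.succ β) := Ordinal.iterate_le_nfp f _ (n + 1)

theorem isClubIn_setOf_forall_lt_apply_le {h : Ordinal.{0} → Ordinal.{0}}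
    (hh : ∀ α < omega1, h α < omega1) {γ : Ordinal.{0}} (hγ : γ < omega1) :
    IsClubIn {δ | δ < omega1 ∧ γ < δ ∧ ∀ α < δ, h α ≤ δ} := by
  refine ⟨fun δ hδ => hδ.1, fun β hβ => ?_, fun S hS hne hbdd hlt => ⟨hlt, ?_, fun α hα => ?_⟩⟩
  · obtain ⟨δ, hδ, hβγδ, hclosed⟩ := exists_gt_forall_lt_apply_le hh (max_lt hβ hγ)
    exact ⟨δ, ⟨hδ, (le_max_right β γ).trans_lt hβγδ, hclosed⟩, (le_max_left β γ).trans_lt hβγδ⟩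
  · obtain ⟨s, hs⟩ := hne
    exact (hS hs).2.1.trans_le (le_csSup hbdd hs)
  · obtain ⟨s, hs, hαs⟩ := exists_lt_of_lt_csSup hne hα
    exact ((hS hs).2.2 α hαs).trans (le_csSup hbdd hs)

/-- `A` guesses every subset of `ω₁` on a stationary set: the property of the sequence that
`DiamondPrinciple` provides. -/
def IsGuessingSequence (A : Ordinal.{0} → Set Ordinal.{0}) : Prop :=
  ∀ B : Set Ordinal.{0}, B ⊆ Iio omega1 → IsStationaryIn {α | α < omega1 ∧ B ∩ Iio α = A α}

/-- The set of natural numbers that `A` names at stage `γ`. -/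
def code (A : Ordinal.{0} → Set Ordinal.{0}) (γ : Ordinal.{0}) : Set ℕ :=
  {n | (n : Ordinal.{0}) ∈ A γ}

namespace IsGuessingSequence

variable {A : Ordinal.{0} → Set Ordinal.{0}}

theorem exists_eq_of_forall_lt_apply_le (hA : IsGuessingSequence A) {B : Set Ordinal.{0}}
    (hB : B ⊆ Iio omega1) {h : Ordinal.{0} → Ordinal.{0}} (hh : ∀ α < omega1, h α < omega1)
    {γ : Ordinal.{0}} (hγ : γ < omega1) :
    ∃ δ < omega1, γ < δ ∧ A δ = B ∩ Iio δ ∧ ∀ α < δ, h α ≤ δ := by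
  obtain ⟨δ, ⟨hδ, hBδ⟩, -, hγδ, hclosed⟩ := hA B hB _ (isClubIn_setOf_forall_lt_apply_le hh hγ)
  exact ⟨δ, hδ, hγδ, hBδ.symm, hclosed⟩

theorem exists_code_eq (hA : IsGuessingSequence A) (S : Set ℕ) : ∃ γ < omega1, code A γ = S := by
  have hS : ((↑) : ℕ → Ordinal.{0}) '' S ⊆ Iio omega1 :=
    image_subset_iff.2 fun n _ => (Ordinal.natCast_lt_omega0 n).trans omega0_lt_omega1
  obtain ⟨γ, hγ, hωγ, hAγ, -⟩ :=
    hA.exists_eq_of_forall_lt_apply_le hS (h := id) (fun _ => id) omega0_lt_omega1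
  refine ⟨γ, hγ, Set.ext fun n => ?_⟩
  have hn : (n : Ordinal.{0}) < γ := (Ordinal.natCast_lt_omega0 n).trans hωγ
  simp only [code, hAγ, mem_ofPred_eq, mem_inter_iff, mem_Iio, hn, and_true,
    Nat.cast_injective.mem_set_image]

theorem exists_image_eq_subset_relClosure (hA : IsGuessingSequence A) {X : Type*}
    {P : Ordinal.{0} → Set (Set X)} (hP : ∀ α < omega1, (P α).Countable) {x : Ordinal.{0} → X}
    {Z : Set X} (hZ : Z ⊆ x '' Iio omega1) {γ : Ordinal.{0}} (hγ : γ < omega1) :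
    ∃ δ < omega1, γ < δ ∧ x '' (A δ ∩ Iio δ) = x '' Iio δ ∩ Z ∧
      Z ⊆ relClosure (⋃₀ (P '' Iio δ)) (x '' Iio δ ∩ Z) := by
  have hwitness : ∀ p : Set X, ∃ β < omega1, (Z ∩ p).Nonempty → x β ∈ Z ∩ p := fun p => by
    rcases (Z ∩ p).eq_empty_or_nonempty with hp | ⟨z, hz⟩
    · exact ⟨γ, hγ, fun h => (h.ne_empty hp).elim⟩
    · obtain ⟨β, hβ, rfl⟩ := hZ hz.1
      exact ⟨β, hβ, fun _ => hz⟩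
  choose b hb hbx using hwitness
  obtain ⟨δ, hδ, hγδ, hAδ, hclosed⟩ := hA.exists_eq_of_forall_lt_apply_le
    (B := Iio omega1 ∩ x ⁻¹' Z) inter_subset_left
    (h := fun α => ⨆ p : P α, Order.succ (b p)) (fun α hα =>
      have := (hP α hα).to_subtype
      iSup_lt_omega1 fun p => isSuccLimit_omega1.succ_lt (hb p)) hγ
  have hAZ : A δ ∩ Iio δ = Iio δ ∩ x ⁻¹' Z := by
    rw [hAδ]
    exact Set.ext fun β => ⟨fun h => ⟨h.2, h.1.1.2⟩, fun h => ⟨⟨⟨lt_trans h.1 hδ, h.2⟩, h.1⟩, h.1⟩⟩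
  refine ⟨δ, hδ, hγδ, by rw [hAZ, image_inter_preimage], ?_⟩
  rintro z hz p ⟨_, ⟨α, hα, rfl⟩, hp⟩ hzp
  have := (hP α (lt_trans hα hδ)).to_subtype
  have hbδ : b p < δ := Order.succ_le_iff.1 <|
    (Ordinal.le_iSup (fun p : P α => Order.succ (b p)) ⟨p, hp⟩).trans (hclosed α hα)
  obtain ⟨hbZ, hbp⟩ := hbx p ⟨z, hz, hzp⟩
  exact ⟨x (b p), hbp, mem_image_of_mem x hbδ, hbZ⟩

end IsGuessingSequence

/-! ### Towers of refinements -/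

theorem exists_transfinite_choice {Ω : Type*} [Nonempty Ω]
    {R : Ordinal.{0} → (Ordinal.{0} → Ω) → Ω → Prop}
    (hR : ∀ {δ f g}, EqOn f g (Iio δ) → R δ f = R δ g) :
    ∃ f : Ordinal.{0} → Ω, ∀ δ, (∃ w, R δ f w) → R δ f (f δ) := by
  classical
  let extend (δ : Ordinal.{0}) (g : ∀ α < δ, Ω) : Ordinal.{0} → Ω := fun α =>
    if hα : α < δ then g α hα else Classical.arbitrary Ω
  let step (δ : Ordinal.{0}) (g : ∀ α < δ, Ω) : Ω := Classical.epsilon (R δ (extend δ g))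
  let f : Ordinal.{0} → Ω := wellFounded_lt.fix step
  refine ⟨f, fun δ hδ => ?_⟩
  have hf : f δ = Classical.epsilon (R δ f) := by
    have hext : EqOn (extend δ fun α _ => f α) f (Iio δ) := fun α hα => dif_pos hα
    rw [← hR hext]
    exact WellFounded.fix_eq _ _ _
  exact hf ▸ Classical.epsilon_spec hδ

theorem isChain_refines_image_Iio {X : Type*} {P : Ordinal.{0} → Set (Set X)} {δ : Ordinal.{0}}
    (hP : ∀ α < δ, ∀ β < α, Refines (P α) (P β)) : IsChain Refines (P '' Iio δ) := by
  rintro _ ⟨α, hα, rfl⟩ _ ⟨β, hβ, rfl⟩ hne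
  rcases lt_trichotomy α β with h | rfl | h
  · exact .inr (hP β hβ α h)
  · exact (hne rfl).elim
  · exact .inl (hP α hα β h)

theorem exists_nonempty_isRefinement_image_Iio {X : Type*} [MetricSpace X]
    {𝒱 : ℕ → Set (Set X)} (h𝒱 : Monotone 𝒱) {P₀ : Set (Set X)} (hP₀ : IsSplittingFamily 𝒱 P₀)
    (hP₀c : P₀.Countable) (hP₀ne : P₀.Nonempty) {P : Ordinal.{0} → Set (Set X)}
    {J : Ordinal.{0} → Set (Set X)} (hJ : ∀ γ, ∀ D ∈ J γ, IsOpen D) {Z : Ordinal.{0} → Set X}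
    {δ : Ordinal.{0}} (hδ : δ < omega1) (hZ : (Z δ).Countable)
    (hP : ∀ α < δ, IsRefinement 𝒱 (P '' Iio α) (J '' Iio α) (Z α) (P α))
    (hPne : ∀ α < δ, (P α).Nonempty) :
    ∃ Q : Set (Set X), Q.Nonempty ∧ IsRefinement 𝒱 (P '' Iio δ) (J '' Iio δ) (Z δ) Q := by
  rcases eq_zero_or_pos δ with rfl | hδ₀
  · exact ⟨P₀, hP₀ne, hP₀c, hP₀, by simp, by simp⟩
  obtain ⟨p, hp⟩ := hPne 0 hδ₀
  have hP0 : P 0 ∈ P '' Iio δ := mem_image_of_mem P hδ₀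
  have hcount := countable_Iio_of_lt_omega1 hδ
  obtain ⟨Q, hQ⟩ := exists_isRefinement h𝒱 (Z := Z δ) (hcount.image P)
    (forall_mem_image.2 fun α hα => (hP α hα).countable)
    (forall_mem_image.2 fun α hα => (hP α hα).isSplittingFamily)
    (isChain_refines_image_Iio fun α hα β hβ => (hP α hα).refines _ (mem_image_of_mem P hβ))
    ⟨p, P 0, hP0, hp⟩ (hcount.image J) (forall_mem_image.2 fun γ _ => hJ γ) hZ
  obtain ⟨q, hq, -⟩ := (hQ.refines _ hP0).coinitial hp
  exact ⟨Q, ⟨q, hq⟩, hQ⟩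

/-- The families `P δ` refine each other along `ω₁`, each of them contains the point `x δ` in its
union, and `P δ` captures those of the earlier covers `J γ` which are ω-covers of the set of
earlier points whose indices are guessed by `A δ`. -/
structure IsRefinementTower {X : Type*} [TopologicalSpace X] (𝒱 : ℕ → Set (Set X))
    (A : Ordinal.{0} → Set Ordinal.{0}) (J P : Ordinal.{0} → Set (Set X)) (x : Ordinal.{0} → X) :
    Prop where
  isRefinement : ∀ δ < omega1,
    IsRefinement 𝒱 (P '' Iio δ) (J '' Iio δ) (x '' (A δ ∩ Iio δ)) (P δ)
  mem_sUnion : ∀ δ < omega1, x δ ∈ ⋃₀ P δ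

theorem exists_isRefinementTower {X : Type*} [MetricSpace X] {𝒱 : ℕ → Set (Set X)}
    (h𝒱 : Monotone 𝒱) {P₀ : Set (Set X)} (hP₀ : IsSplittingFamily 𝒱 P₀) (hP₀c : P₀.Countable)
    (hP₀ne : P₀.Nonempty) (A : Ordinal.{0} → Set Ordinal.{0}) {J : Ordinal.{0} → Set (Set X)}
    (hJ : ∀ γ, ∀ D ∈ J γ, IsOpen D) {T : Ordinal.{0} → ℕ → Set X}
    (hT : ∀ δ k, ∃ n, T δ k ∈ 𝒱 n) :
    ∃ P x, IsRefinementTower 𝒱 A J P x ∧ ∀ δ < omega1, ∀ k, x δ ∈ T δ k := by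
  obtain ⟨p₀, hp₀⟩ := hP₀ne
  obtain ⟨x₀, -⟩ := hP₀.nonempty p₀ hp₀
  have : Nonempty (Set (Set X) × X) := ⟨∅, x₀⟩
  obtain ⟨f, hf⟩ := exists_transfinite_choice (Ω := Set (Set X) × X) (R := fun δ f w =>
    IsRefinement 𝒱 ((fun α => (f α).1) '' Iio δ) (J '' Iio δ)
      ((fun α => (f α).2) '' (A δ ∩ Iio δ)) w.1 ∧ w.2 ∈ ⋃₀ w.1 ∧ ∀ k, w.2 ∈ T δ k) (by
    intro δ f g hfg
    have hfst : (fun α => (f α).1) '' Iio δ = (fun α => (g α).1) '' Iio δ :=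
      image_congr fun α hα => congrArg Prod.fst (hfg hα)
    have hsnd : (fun α => (f α).2) '' (A δ ∩ Iio δ) = (fun α => (g α).2) '' (A δ ∩ Iio δ) :=
      image_congr fun α hα => congrArg Prod.snd (hfg hα.2)
    simp only [hfst, hsnd])
  have hstage : ∀ δ < omega1, IsRefinement 𝒱 ((fun α => (f α).1) '' Iio δ) (J '' Iio δ)
      ((fun α => (f α).2) '' (A δ ∩ Iio δ)) (f δ).1 ∧ (f δ).2 ∈ ⋃₀ (f δ).1 ∧
        ∀ k, (f δ).2 ∈ T δ k := by
    intro δ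
    induction δ using WellFoundedLT.induction with
    | ind δ ih =>
      intro hδ
      obtain ⟨Q, ⟨q, hq⟩, hQ⟩ := exists_nonempty_isRefinement_image_Iio h𝒱 hP₀ hP₀c ⟨p₀, hp₀⟩ hJ hδ
        (((countable_Iio_of_lt_omega1 hδ).mono inter_subset_right).image _)
        (fun α hα => (ih α hα (hα.trans hδ)).1)
        (fun α hα => (nonempty_of_mem (ih α hα (hα.trans hδ)).2.1).of_sUnion)
      obtain ⟨x, hx, hxT⟩ := hQ.isSplittingFamily.exists_mem_forall_mem hq (hT δ)
      exact hf δ ⟨(Q, x), hQ, ⟨q, hq, hx⟩, hxT⟩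
  exact ⟨fun α => (f α).1, fun α => (f α).2, ⟨fun δ hδ => (hstage δ hδ).1,
    fun δ hδ => (hstage δ hδ).2.1⟩, fun δ hδ => (hstage δ hδ).2.2⟩

namespace IsRefinementTower

variable {X : Type*} [TopologicalSpace X] {𝒱 : ℕ → Set (Set X)}
  {A : Ordinal.{0} → Set Ordinal.{0}} {J P : Ordinal.{0} → Set (Set X)} {x : Ordinal.{0} → X}

theorem mem_sUnion_of_le (h : IsRefinementTower 𝒱 A J P x) {δ β : Ordinal.{0}} (hδβ : δ ≤ β)
    (hβ : β < omega1) : x β ∈ ⋃₀ P δ := by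
  rcases hδβ.eq_or_lt with rfl | hlt
  · exact h.mem_sUnion _ hβ
  · exact ((h.isRefinement β hβ).refines _ (mem_image_of_mem P hlt)).sUnion_subset
      (h.mem_sUnion β hβ)

theorem hasGammaSequence (h : IsRefinementTower 𝒱 A J P x) (hA : IsGuessingSequence A)
    {Z : Set X} (hZ : Z ⊆ x '' Iio omega1) {γ : Ordinal.{0}} (hγ : γ < omega1)
    (hJ : IsOmegaCover (J γ) Z) : HasGammaSequence (J γ) Z := by
  obtain ⟨δ, hδ, hγδ, hAδ, hcl⟩ :=
    hA.exists_image_eq_subset_relClosure (fun α hα => (h.isRefinement α hα).countable) hZ hγ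
  have hcapture := (h.isRefinement δ hδ).capture (J γ) (mem_image_of_mem J hγδ)
  rw [hAδ] at hcapture
  refine (hcapture (hJ.mono inter_subset_right)).mono fun z hz => ?_
  obtain ⟨β, hβ, rfl⟩ := hZ hz
  rcases lt_or_ge β δ with hβδ | hδβ
  · exact .inl ⟨mem_image_of_mem x hβδ, hz⟩
  · exact .inr ⟨h.mem_sUnion_of_le hδβ hβ, hcl hz⟩

end IsRefinementTower

theorem exists_seq_isOpen_finset_basis (X : Type*) [TopologicalSpace X]
    [SecondCountableTopology X] :
    ∃ V : ℕ → Set X, (∀ n, IsOpen (V n)) ∧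
      ∀ (F : Finset X) (O : Set X), IsOpen O → ↑F ⊆ O → ∃ n, ↑F ⊆ V n ∧ V n ⊆ O := by
  let B := TopologicalSpace.countableBasis X
  have hcount : {t : Set (Set X) | t.Finite ∧ t ⊆ B}.Countable :=
    countable_ofPred_finite_subset (TopologicalSpace.countable_countableBasis X)
  obtain ⟨e, he⟩ := hcount.exists_eq_range ⟨∅, finite_empty, empty_subset _⟩
  refine ⟨fun n => ⋃₀ e n, fun n => ?_, fun F O hO hFO => ?_⟩
  · have hn : e n ∈ {t : Set (Set X) | t.Finite ∧ t ⊆ B} := he ▸ mem_range_self n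
    exact isOpen_sUnion fun t ht => TopologicalSpace.isOpen_of_mem_countableBasis (hn.2 ht)
  · have hbasis : ∀ x ∈ F, ∃ b ∈ B, x ∈ b ∧ b ⊆ O := fun x hx =>
      (TopologicalSpace.isBasis_countableBasis X).exists_subset_of_mem_open (hFO hx) hO
    choose! b hbB hxb hbO using hbasis
    obtain ⟨n, hn : e n = b '' F⟩ : b '' F ∈ range e :=
      he ▸ ⟨F.finite_toSet.image b, image_subset_iff.2 hbB⟩
    refine ⟨n, fun x hx => ⟨b x, hn ▸ mem_image_of_mem b hx, hxb x hx⟩, sUnion_subset ?_⟩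
    exact hn ▸ forall_mem_image.2 hbO

theorem exists_surjective_set_nat (X : Type*) [TopologicalSpace X] [SecondCountableTopology X]
    [T0Space X] [Nonempty X] : ∃ d : Set ℕ → X, Function.Surjective d := by
  obtain ⟨V, hV, hbasis⟩ := exists_seq_isOpen_finset_basis X
  have hinj : Function.Injective fun x : X => {n | x ∈ V n} := fun x y hxy => by
    refine TopologicalSpace.IsTopologicalBasis.eq_iff (b := range V) ?_ |>.2 ?_
    · refine TopologicalSpace.isTopologicalBasis_of_isOpen_of_nhds (forall_mem_range.2 hV) ?_
      intro a O ha hO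
      obtain ⟨n, han, hnO⟩ := hbasis {a} O hO (by simpa using ha)
      exact ⟨V n, mem_range_self n, by simpa using han, hnO⟩
    · exact forall_mem_range.2 fun n => Set.ext_iff.1 hxy n
  exact ⟨_, Function.invFun_surjective hinj⟩

theorem exists_hereditary_gammaSet_of_diamond_of_isSplittingFamily {X : Type*} [MetricSpace X]
    [SecondCountableTopology X] (hd : DiamondPrinciple) {𝒱 : ℕ → Set (Set X)} (h𝒱 : Monotone 𝒱)
    {P₀ : Set (Set X)} (hP₀ : IsSplittingFamily 𝒱 P₀) (hP₀c : P₀.Countable) (hP₀ne : P₀.Nonempty)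
    {T : Set ℕ → ℕ → Set X} (hT : ∀ S k, ∃ n, T S k ∈ 𝒱 n) :
    ∃ Y : Set X, (∀ Z ⊆ Y, IsGammaSet Z) ∧ ∀ S, ∃ x ∈ Y, ∀ k, x ∈ T S k := by
  obtain ⟨A, -, hA : IsGuessingSequence A⟩ := hd
  obtain ⟨V, hV, hbasis⟩ := exists_seq_isOpen_finset_basis X
  obtain ⟨P, x, hPx, hx⟩ := exists_isRefinementTower h𝒱 hP₀ hP₀c hP₀ne A
    (J := fun γ => V '' code A γ) (fun γ => forall_mem_image.2 fun n _ => hV n)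
    (T := fun γ => T (code A γ)) fun γ => hT (code A γ)
  refine ⟨x '' Iio omega1, fun Z hZ => isGammaSet_iff_hasGammaSequence.2 fun J hJ hJZ => ?_,
    fun S => ?_⟩
  · obtain ⟨γ, hγ, hcode⟩ := hA.exists_code_eq {n | ∃ O ∈ J, V n ⊆ O}
    have hcover : IsOmegaCover (V '' code A γ) Z := fun F hF => by
      obtain ⟨O, hO, hFO⟩ := hJZ F hF
      obtain ⟨n, hFn, hnO⟩ := hbasis F O (hJ O hO) hFO
      exact ⟨V n, mem_image_of_mem V (hcode ▸ ⟨O, hO, hnO⟩), hFn⟩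
    refine (hPx.hasGammaSequence hA hZ hγ hcover).of_forall_subset ?_
    exact hcode ▸ forall_mem_image.2 fun n hn => hn
  · obtain ⟨γ, hγ, rfl⟩ := hA.exists_code_eq S
    exact ⟨x γ, mem_image_of_mem x hγ, hx γ hγ⟩

/-! ### Open sets with dense sections -/

/-- The closures of the nonempty relatively compact members of a countable basis: a countable
π-base of compact sets when the space is locally compact and Hausdorff. -/
def compactBasis (X : Type*) [TopologicalSpace X] [SecondCountableTopology X] : Set (Set X) :=
  closure '' {b ∈ TopologicalSpace.countableBasis X | b.Nonempty ∧ IsCompact (closure b)}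

section CompactBasis

variable {X : Type*} [TopologicalSpace X] [SecondCountableTopology X]

theorem countable_compactBasis : (compactBasis X).Countable :=
  ((TopologicalSpace.countable_countableBasis X).mono (sep_subset _ _)).image _

theorem isCompact_of_mem_compactBasis {p : Set X} (hp : p ∈ compactBasis X) : IsCompact p := by
  obtain ⟨b, hb, rfl⟩ := hp
  exact hb.2.2

theorem interior_nonempty_of_mem_compactBasis {p : Set X} (hp : p ∈ compactBasis X) :
    (interior p).Nonempty := by
  obtain ⟨b, hb, rfl⟩ := hp
  exact hb.2.1.mono
    ((TopologicalSpace.isOpen_of_mem_countableBasis hb.1).subset_interior_closure)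

variable [LocallyCompactSpace X] [T2Space X]

theorem exists_mem_compactBasis_subset {O : Set X} (hO : IsOpen O) (hne : O.Nonempty) :
    ∃ p ∈ compactBasis X, p ⊆ O := by
  obtain ⟨x, hx⟩ := hne
  obtain ⟨K, hK, hxK, hKO⟩ := exists_compact_subset hO hx
  obtain ⟨b, hb, hxb, hbK⟩ := (TopologicalSpace.isBasis_countableBasis X).exists_subset_of_mem_open
    hxK isOpen_interior
  have hbK' : closure b ⊆ K := closure_minimal (hbK.trans interior_subset) hK.isClosed
  exact ⟨closure b, mem_image_of_mem _ ⟨hb, ⟨x, hxb⟩, hK.of_isClosed_subset isClosed_closure hbK'⟩,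
    hbK'.trans hKO⟩

theorem exists_finite_compactBasis_prod_subset {Y : Type*} [TopologicalSpace Y] {W : Set (X × Y)}
    (hW : IsOpen W) (hWd : ∀ y, Dense {x | (x, y) ∈ W}) {K : Set Y} (hK : IsCompact K) {O : Set X}
    (hO : IsOpen O) (hne : O.Nonempty) :
    ∃ S ⊆ {q ∈ compactBasis X | q ⊆ O}, S.Finite ∧ ∀ y ∈ K, ∃ q ∈ S, ∀ x ∈ q, (x, y) ∈ W := by
  refine hK.induction_on (p := fun K => ∃ S ⊆ {q ∈ compactBasis X | q ⊆ O}, S.Finite ∧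
    ∀ y ∈ K, ∃ q ∈ S, ∀ x ∈ q, (x, y) ∈ W) ⟨∅, empty_subset _, finite_empty, by simp⟩
    (fun K K' hKK' ⟨S, hSO, hS, hSK⟩ => ⟨S, hSO, hS, fun y hy => hSK y (hKK' hy)⟩)
    (fun K K' ⟨S, hSO, hS, hSK⟩ ⟨S', hSO', hS', hSK'⟩ => ?_) fun y _ => ?_
  · refine ⟨S ∪ S', union_subset hSO hSO', hS.union hS', ?_⟩
    rintro y (hy | hy)
    · exact (hSK y hy).imp fun q hq => ⟨.inl hq.1, hq.2⟩
    · exact (hSK' y hy).imp fun q hq => ⟨.inr hq.1, hq.2⟩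
  · have hsection : IsOpen {x | (x, y) ∈ W} := hW.preimage (by fun_prop)
    obtain ⟨q, hq, hqO⟩ := exists_mem_compactBasis_subset (hO.inter hsection)
      ((hWd y).inter_open_nonempty O hO hne)
    obtain ⟨U, N, -, hN, hqU, hyN, hUN⟩ := generalized_tube_lemma
      (isCompact_of_mem_compactBasis hq) (isCompact_singleton (x := y)) hW
      (by rintro ⟨x, y⟩ ⟨hx, rfl⟩; exact (hqO hx).2)
    refine ⟨N, mem_nhdsWithin_of_mem_nhds (hN.mem_nhds (hyN rfl)), {q},
      singleton_subset_iff.2 ⟨hq, hqO.trans inter_subset_left⟩, finite_singleton q,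
      fun z hz => ⟨q, rfl, fun x hx => hUN ⟨hqU hx, hz⟩⟩⟩

end CompactBasis

/-- The sections of `W 0, …, W n` at the points of the `n`-th set of a compact exhaustion of `Y`. -/
def compactSections {X Y : Type*} [TopologicalSpace Y] [SigmaCompactSpace Y] (W : ℕ → Set (X × Y))
    (n : ℕ) : Set (Set X) :=
  ⋃ k ∈ Iic n, (fun y => {x | (x, y) ∈ W k}) '' compactCovering Y n

section CompactSections

variable {X Y : Type*} [TopologicalSpace Y] [SigmaCompactSpace Y] {W : ℕ → Set (X × Y)}

theorem monotone_compactSections : Monotone (compactSections W) := fun _ _ hmn =>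
  biUnion_mono (Iic_subset_Iic.2 hmn) fun _ _ => image_mono (compactCovering_subset Y hmn)

theorem exists_section_mem_compactSections (k : ℕ) (y : Y) :
    ∃ n, {x | (x, y) ∈ W k} ∈ compactSections W n := by
  obtain ⟨m, hm⟩ := exists_mem_compactCovering y
  exact ⟨max k m, mem_biUnion (le_max_left k m)
    (mem_image_of_mem _ (compactCovering_subset Y (le_max_right k m) hm))⟩

variable [TopologicalSpace X] [SecondCountableTopology X] [LocallyCompactSpace X] [T2Space X]

theorem isSplittingFamily_compactBasis (hW : ∀ k, IsOpen (W k))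
    (hWd : ∀ k y, Dense {x | (x, y) ∈ W k}) :
    IsSplittingFamily (compactSections W) (compactBasis X) where
  isCompact _ := isCompact_of_mem_compactBasis
  nonempty _ hp := (interior_nonempty_of_mem_compactBasis hp).mono interior_subset
  shrink := by
    rintro _ ⟨b, hb, rfl⟩ x hx O hO hxO
    have hbo := TopologicalSpace.isOpen_of_mem_countableBasis hb.1
    obtain ⟨q, hq, hqb⟩ := exists_mem_compactBasis_subset (hO.inter hbo)
      (mem_closure_iff.1 hx O hO hxO)
    exact ⟨q, hq, fun y hy => ⟨subset_closure (hqb hy).2, (hqb hy).1⟩⟩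
  split p hp n := by
    choose S hSp hS hSW using fun k => exists_finite_compactBasis_prod_subset (hW k) (hWd k)
      (isCompact_compactCovering Y n) isOpen_interior (interior_nonempty_of_mem_compactBasis hp)
    refine ⟨⋃ k ∈ Iic n, S k, iUnion₂_subset fun k _ q hq =>
      ⟨(hSp k hq).1, (hSp k hq).2.trans interior_subset⟩,
      (finite_Iic n).biUnion fun k _ => hS k, ?_⟩
    intro V hV
    obtain ⟨k, hk, y, hy, rfl⟩ := mem_iUnion₂.1 hV
    obtain ⟨q, hq, hqW⟩ := hSW k y hy
    exact ⟨q, mem_biUnion hk hq, hqW⟩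

end CompactSections

theorem exists_hereditary_gammaSet_of_diamond_of_dense_sections {X Y : Type*} [TopologicalSpace X]
    [SecondCountableTopology X] [LocallyCompactSpace X] [T2Space X] [Nonempty X]
    [TopologicalSpace Y] [SecondCountableTopology Y] [SigmaCompactSpace Y] [T0Space Y]
    [Nonempty Y] (hd : DiamondPrinciple) {W : ℕ → Set (X × Y)} (hW : ∀ k, IsOpen (W k))
    (hWd : ∀ k y, Dense {x | (x, y) ∈ W k}) :
    ∃ E : Set X, (∀ Z ⊆ E, IsGammaSet Z) ∧ ∀ y, ∃ x ∈ E, ∀ k, (x, y) ∈ W k := by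
  let := TopologicalSpace.metrizableSpaceMetric X
  obtain ⟨d, hsurj⟩ := exists_surjective_set_nat Y
  obtain ⟨p, hp, -⟩ := exists_mem_compactBasis_subset (X := X) isOpen_univ univ_nonempty
  obtain ⟨E, hE, hmeet⟩ := exists_hereditary_gammaSet_of_diamond_of_isSplittingFamily hd
    monotone_compactSections (isSplittingFamily_compactBasis hW hWd) countable_compactBasis
    ⟨p, hp⟩ (T := fun S k => {x | (x, d S) ∈ W k})
    fun S k => exists_section_mem_compactSections k (d S)
  exact ⟨E, hE, hsurj.forall.2 hmeet⟩

theorem real_hereditary_gammaSet_not_stronglyMeager_of_diamond_general {X : Type*} [AddGroup X]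
    [TopologicalSpace X] [IsTopologicalAddGroup X] [LocallyCompactSpace X]
    [SecondCountableTopology X] [T2Space X] (hd : DiamondPrinciple) {G : Set X} (hG : IsGδ G)
    (hGd : Dense G) : ∃ Y : Set X, (∀ Z ⊆ Y, IsGammaSet Z) ∧ Y + G = univ := by
  obtain ⟨U, hU, rfl⟩ := isGδ_iff_eq_iInter_nat.1 hG
  obtain ⟨Y, hY, hYU⟩ := exists_hereditary_gammaSet_of_diamond_of_dense_sections hd
    (W := fun k => {z : X × X | -z.1 + z.2 ∈ U k}) (fun k => (hU k).preimage (by fun_prop))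
    fun k y => (hGd.mono (iInter_subset U k)).preimage
      ((Homeomorph.neg X).trans (Homeomorph.addRight y)).isOpenMap
  refine ⟨Y, hY, eq_univ_of_forall fun y => ?_⟩
  obtain ⟨x, hx, hxy⟩ := hYU y
  exact ⟨x, hx, -x + y, mem_iInter.2 hxy, add_neg_cancel_left x y⟩

/-- Assume `◊`. Then there is a set `Y ⊆ ℝ` all of whose subsets are γ-sets, which is not
strongly meager: there is a Lebesgue-null set `G' ⊆ ℝ` with `Y + G' = ℝ`. -/
theorem real_hereditary_gammaSet_not_stronglyMeager_of_diamond (hd : DiamondPrinciple) :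
    ∃ Y : Set ℝ, (∀ Z ⊆ Y, IsGammaSet Z) ∧
      ∃ G' : Set ℝ, volume G' = 0 ∧ Y + G' = Set.univ :=
  let ⟨Y, hY, hYG⟩ := real_hereditary_gammaSet_not_stronglyMeager_of_diamond_general hd
    IsGδ.setOfPred_liouville dense_liouville
  ⟨Y, hY, _, volume_setOfPred_liouville, hYG⟩
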